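/- arXiv:2412.10340 — 2 statements merged into one kernel-verified Lean document; each statement's English description precedes it below -/
import Mathlib

section
/- Let G ≤ GL₂(ℤ_p) be an N-Cartan lift with respect to the Cartan subgroup C, and suppose the image of G(p) ∩ C(p) in PGL₂(𝔽_p) contains an element of order greater than 2. If dim 𝔤₁ = 3, then dim 𝔤ₙ = 4 for every n > 1. -/
/-!
Both Cartan algebras over `𝔽_p` have the form `𝔽_p[J]` with `J² = d ≠ 0` scalar: `J` is
`diag(1, -1)` in the split case and `[[0, ε], [1, 0]]` in the non-split case. An element `w` of
`G(p)` outside `C(p)` anticommutes with `J` and has scalar square `e ≠ 0`, so `1, J, w, wJ` is an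
orthogonal basis of `gl₂(𝔽_p)` for the trace form (`core_span`). An element `c = x + yJ` of `G(p)`
whose projective order exceeds `2` satisfies `x y ≠ 0`.

The space `𝔤₁` is stable under conjugation by `c` and `w`. Having dimension `3`, it meets the plane
`⟨w, wJ⟩` nontrivially, and that intersection is stable under right multiplication by `J` (via `c`)
and under `wJ ↦ -wJ`, `w ↦ w` (via `w`); hence `𝔤₁` contains `w` and `wJ`. Surjectivity of the
determinant gives an element of nonzero trace in `𝔤₁` (`exists_trace_ne_zero`), because `p` does
not divide the order of `G(p)`; averaging it over conjugation by `w` yields `1 ∈ 𝔤₁`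
(`core_mem`).

Finally, group commutators give `[𝔤₁, 𝔤₁] ⊆ 𝔤₂` (`glSet_comm`), so `𝔤₂` contains
`[w, wJ] = 2eJ`, and `p`-th powers give `𝔤ₙ ⊆ 𝔤ₙ₊₁` (`glSet_succ`). Hence `𝔤ₙ` contains the whole
basis for `n ≥ 2`.
-/

open Matrix

noncomputable section

variable (p : ℕ) [Fact p.Prime]

/-- Reduction `GL₂(ℤ_p) → GL₂(ℤ/pⁿℤ)` of the matrix entries modulo `pⁿ`;
`G(pⁿ)` is the image of `G` under this map. -/
def redPow (n : ℕ) : GL (Fin 2) ℤ_[p] →* GL (Fin 2) (ZMod (p ^ n)) :=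
  Matrix.GeneralLinearGroup.map (PadicInt.toZModPow n)

/-- Reduction `GL₂(ℤ_p) → GL₂(𝔽_p)` of the matrix entries modulo `p`;
`G(p)` is the image of `G` under this map. -/
def red : GL (Fin 2) ℤ_[p] →* GL (Fin 2) (ZMod p) :=
  Matrix.GeneralLinearGroup.map (PadicInt.toZMod)

/-- The least positive integer representing a quadratic non-residue modulo `p`. -/
def epsN : ℕ := sInf {n : ℕ | 0 < n ∧ ¬ IsSquare ((n : ZMod p))}

/-- The (carrier set of the) split Cartan subgroup of `GL₂(R)`:
invertible diagonal matrices. -/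
def cspSet (R : Type*) [CommRing R] : Set (GL (Fin 2) R) :=
  {A | ∃ a b : R, (A : Matrix (Fin 2) (Fin 2) R) = !![a, 0; 0, b]}

/-- The (carrier set of the) normaliser `C_sp⁺ = C_sp ∪ [[0,1],[1,0]]·C_sp`. -/
def cspPlusSet (R : Type*) [CommRing R] : Set (GL (Fin 2) R) :=
  {A | ∃ a b : R, (A : Matrix (Fin 2) (Fin 2) R) = !![a, 0; 0, b] ∨
    (A : Matrix (Fin 2) (Fin 2) R) = !![0, 1; 1, 0] * !![a, 0; 0, b]}

/-- The (carrier set of the) non-split Cartan subgroup of `GL₂(R)`: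
invertible matrices of the shape `[[a, εb], [b, a]]`.  (Over `ℤ_p`, resp. `ℤ/pⁿℤ`,
invertibility forces `(a, b) ≢ (0, 0) mod p`.) -/
def cnsSet (R : Type*) [CommRing R] (ε : R) : Set (GL (Fin 2) R) :=
  {A | ∃ a b : R, (A : Matrix (Fin 2) (Fin 2) R) = !![a, ε * b; b, a]}

/-- The (carrier set of the) normaliser `C_ns⁺ = C_ns ∪ [[1,0],[0,-1]]·C_ns`. -/
def cnsPlusSet (R : Type*) [CommRing R] (ε : R) : Set (GL (Fin 2) R) :=
  {A | ∃ a b : R, (A : Matrix (Fin 2) (Fin 2) R) = !![a, ε * b; b, a] ∨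
    (A : Matrix (Fin 2) (Fin 2) R) = !![(1 : R), 0; 0, -1] * !![a, ε * b; b, a]}

/-- `G ≤ GL₂(ℤ_p)` is an *N-Cartan lift* with respect to the Cartan subgroup with
carrier set `C` (with normaliser carrier set `Cplus`): `G` is closed,
`det G = ℤ_p^×`, the reduction `G(p)` is contained in `C⁺(p)` but not in `C(p)`, and
`G(p)` contains an element of `C(p)` which is not a scalar multiple of the identity. -/
def IsNCartanLift (G : Subgroup (GL (Fin 2) ℤ_[p]))
    (C Cplus : Set (GL (Fin 2) ℤ_[p])) : Prop :=
  IsClosed (G : Set (GL (Fin 2) ℤ_[p])) ∧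
  (∀ u : ℤ_[p]ˣ, ∃ A ∈ G, Matrix.GeneralLinearGroup.det A = u) ∧
  (⇑(red p) '' ↑G ⊆ ⇑(red p) '' Cplus) ∧
  ¬ (⇑(red p) '' ↑G ⊆ ⇑(red p) '' C) ∧
  (∃ g ∈ (⇑(red p) '' ↑G) ∩ (⇑(red p) '' C),
    ¬ ∃ c : ZMod p,
      (g : Matrix (Fin 2) (Fin 2) (ZMod p)) = c • (1 : Matrix (Fin 2) (Fin 2) (ZMod p)))

/-- The image `𝔤ₙ` of `Gₙ/Gₙ₊₁` inside `gl₂(𝔽_p)` under `I + pⁿB ↦ (B mod p)`: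
the set of reductions mod `p` of matrices `B` with `I + pⁿB ∈ G`. -/
def glSet (n : ℕ) (G : Subgroup (GL (Fin 2) ℤ_[p])) :
    Set (Matrix (Fin 2) (Fin 2) (ZMod p)) :=
  {M | ∃ A ∈ G, ∃ B : Matrix (Fin 2) (Fin 2) ℤ_[p],
    (A : Matrix (Fin 2) (Fin 2) ℤ_[p]) = 1 + ((p : ℤ_[p]) ^ n) • B ∧
    B.map ⇑(PadicInt.toZMod (p := p)) = M}

/-- The dimension of `𝔤ₙ` as an `𝔽_p`-vector space (recall that `𝔤ₙ` is an
`𝔽_p`-subspace of `gl₂(𝔽_p)`, so it coincides with its span). -/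
def glDim (n : ℕ) (G : Subgroup (GL (Fin 2) ℤ_[p])) : ℕ :=
  Module.finrank (ZMod p) (Submodule.span (ZMod p) (glSet p n G))

/-- `V₁ = 𝔽_p · Id`. -/
def V1 : Submodule (ZMod p) (Matrix (Fin 2) (Fin 2) (ZMod p)) :=
  Submodule.span (ZMod p) {(1 : Matrix (Fin 2) (Fin 2) (ZMod p))}

/-- Non-split case: `V₂ = 𝔽_p · [[0, ε], [1, 0]]`. -/
def V2ns : Submodule (ZMod p) (Matrix (Fin 2) (Fin 2) (ZMod p)) :=
  Submodule.span (ZMod p) {!![0, (epsN p : ZMod p); 1, 0]}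

/-- Non-split case: `V₃ = 𝔽_p · [[1,0],[0,-1]] ⊕ 𝔽_p · [[0,ε],[-1,0]]`. -/
def V3ns : Submodule (ZMod p) (Matrix (Fin 2) (Fin 2) (ZMod p)) :=
  Submodule.span (ZMod p) {!![1, 0; 0, -1], !![0, (epsN p : ZMod p); -1, 0]}

/-- Split case: `V₂ = 𝔽_p · [[1,0],[0,-1]]`. -/
def V2sp : Submodule (ZMod p) (Matrix (Fin 2) (Fin 2) (ZMod p)) :=
  Submodule.span (ZMod p) {!![1, 0; 0, -1]}

/-- Split case: `V₃ = 𝔽_p · [[0,1],[1,0]] ⊕ 𝔽_p · [[0,1],[-1,0]]`. -/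
def V3sp : Submodule (ZMod p) (Matrix (Fin 2) (Fin 2) (ZMod p)) :=
  Submodule.span (ZMod p) {!![0, 1; 1, 0], !![0, 1; -1, 0]}

/-- There is an element of `G(p) ∩ C(p)` whose image in `PGL₂(𝔽_p)` has order
greater than `2`. -/
def HasLargeOrderElt (G : Subgroup (GL (Fin 2) ℤ_[p]))
    (C : Set (GL (Fin 2) ℤ_[p])) : Prop :=
  ∃ g ∈ (⇑(red p) '' ↑G) ∩ (⇑(red p) '' C),
    2 < orderOf (QuotientGroup.mk g :
      GL (Fin 2) (ZMod p) ⧸ Subgroup.center (GL (Fin 2) (ZMod p)))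

/-! ### Quaternionic bases of `2 × 2` matrices and stable hyperplanes -/

section CoreAlgebra

variable {F : Type*} [Field F]

/-- `1, J, w, wJ` span the `2 × 2` matrices, and the coefficient `s` of `1` is half the trace. -/
theorem core_span (h2 : (2 : F) ≠ 0) {J w : Matrix (Fin 2) (Fin 2) F} {d e : F}
    (hd : d ≠ 0) (he : e ≠ 0) (hJ : J * J = d • 1) (hw : w * w = e • 1)
    (hwJ : w * J = -(J * w)) (Y : Matrix (Fin 2) (Fin 2) F) :
    ∃ s t α β : F, 2 * s = Y.trace ∧ Y = s • 1 + t • J + α • w + β • (w * J) := by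
  have h4 : ∀ a : F, a = -a → a = 0 := fun a ha => by
    have : 2 * a = 0 := by linear_combination ha
    simpa [h2] using this
  have tJ : J.trace = 0 := by
    apply h4
    have h : (w * J * w).trace = -(J * w * w).trace := by rw [hwJ]; simp
    rw [Matrix.mul_assoc J, hw, Matrix.trace_mul_cycle, hw] at h
    simp only [Matrix.smul_mul, Matrix.mul_smul, Matrix.one_mul, Matrix.mul_one,
      Matrix.trace_smul, smul_eq_mul] at h
    exact mul_left_cancel₀ he (by linear_combination h)
  have tw : w.trace = 0 := by
    apply h4
    have h : (w * J * J).trace = -(J * w * J).trace := by rw [hwJ]; simp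
    rw [Matrix.mul_assoc w, hJ, Matrix.trace_mul_cycle, hJ] at h
    simp only [Matrix.smul_mul, Matrix.mul_smul, Matrix.one_mul, Matrix.mul_one,
      Matrix.trace_smul, smul_eq_mul] at h
    exact mul_left_cancel₀ hd (by linear_combination h)
  have twJ : (w * J).trace = 0 := by
    apply h4
    conv_lhs => rw [hwJ, Matrix.trace_neg, Matrix.trace_mul_comm]
  have hJw : J * w = -(w * J) := by rw [hwJ, neg_neg]
  have hJJw : J * (w * J) = -(d • w) := by
    rw [← Matrix.mul_assoc, hJw, Matrix.neg_mul, Matrix.mul_assoc, hJ]; simp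
  have hwwJ : w * (w * J) = e • J := by rw [← Matrix.mul_assoc, hw]; simp
  have hwJw : w * J * w = -(e • J) := by rw [Matrix.mul_assoc, hJw, Matrix.mul_neg, hwwJ]
  have hwJwJ : (w * J) * (w * J) = -((d * e) • 1) := by
    rw [← Matrix.mul_assoc, hwJw, Matrix.neg_mul, Matrix.smul_mul, hJ, smul_smul, mul_comm]
  have t1 : (1 : Matrix (Fin 2) (Fin 2) F).trace = 2 := by simp
  -- `1, J, w, wJ` are orthogonal and non-isotropic for the trace form
  have li : LinearIndependent F ![1, J, w, w * J] := by
    rw [Fintype.linearIndependent_iff]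
    intro g hg
    simp [Fin.sum_univ_four] at hg
    have k0 := congrArg Matrix.trace hg
    have k1 := congrArg (fun M => (J * M).trace) hg
    have k2 := congrArg (fun M => (w * M).trace) hg
    have k3 := congrArg (fun M => (w * J * M).trace) hg
    simp only [Matrix.mul_add, Matrix.mul_smul, Matrix.mul_one, Matrix.trace_add, hJ, hw, hJw,
      hJJw, hwwJ, hwJw, hwJwJ, Matrix.trace_smul, Matrix.trace_neg, tJ, tw, twJ, t1,
      Matrix.mul_zero, Matrix.trace_zero, smul_eq_mul] at k0 k1 k2 k3
    have k3' : w * J * J = d • w := by rw [Matrix.mul_assoc, hJ]; simp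
    rw [k3', Matrix.trace_smul, tw] at k3
    intro i
    fin_cases i
    · simpa [h2] using k0
    · simpa [h2, hd] using k1
    · simpa [h2, he] using k2
    · simpa [h2, hd, he] using k3
  have hs := li.span_eq_top_of_card_eq_finrank' (by simp [Module.finrank_matrix])
  have hY : Y ∈ Submodule.span F (Set.range ![1, J, w, w * J]) := by rw [hs]; trivial
  obtain ⟨g, hg⟩ := (Submodule.mem_span_range_iff_exists_fun F).1 hY
  simp [Fin.sum_univ_four] at hg
  refine ⟨g 0, g 1, g 2, g 3, ?_, hg.symm⟩
  rw [← hg]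
  simp [tJ, tw, twJ, mul_comm]

/-- A hyperplane `W` stable under conjugation by `w` and by `c = x + yJ` with `x y ≠ 0`, and not
contained in the trace-zero matrices, contains `1`, `w` and `wJ`. Since `w⁻¹` is a multiple of `w`,
stability under conjugation by `w` is expressed through `X ↦ w X w`. -/
theorem core_mem (h2 : (2 : F) ≠ 0) {J w c c' : Matrix (Fin 2) (Fin 2) F} {d e x y : F}
    (hd : d ≠ 0) (he : e ≠ 0) (hJ : J * J = d • 1) (hw : w * w = e • 1)
    (hwJ : w * J = -(J * w)) (hc : c = x • 1 + y • J) (hx : x ≠ 0) (hy : y ≠ 0)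
    (hc' : c' * c = 1)
    (W : Submodule F (Matrix (Fin 2) (Fin 2) F)) (hW : Module.finrank F W = 3)
    (hWc : ∀ X ∈ W, c * X * c' ∈ W) (hWw : ∀ X ∈ W, w * X * w ∈ W)
    (htr : ∃ X ∈ W, X.trace ≠ 0) :
    1 ∈ W ∧ w ∈ W ∧ w * J ∈ W := by
  have hJw : J * w = -(w * J) := by rw [hwJ, neg_neg]
  obtain ⟨f, hf0, hf⟩ := Submodule.exists_le_ker_of_lt_top W (by
    rw [lt_top_iff_ne_top]
    rintro rfl
    simp [Module.finrank_matrix] at hW)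
  have hker : W = LinearMap.ker f := by
    apply Submodule.eq_of_le_of_finrank_eq hf
    have h1 := LinearMap.finrank_range_add_finrank_ker f
    rw [LinearMap.range_eq_top.2 (LinearMap.surjective hf0)] at h1
    simp [Module.finrank_matrix] at h1
    omega
  -- the plane spanned by `w` and `wJ` meets `W` in a subspace stable under right
  -- multiplication by `J`: conjugation by `c` acts there as right multiplication by `c̄ / c`,
  -- where `c̄ = x - yJ`
  have key : ∀ α β : F, α • w + β • (w * J) ∈ W → (α • w + β • (w * J)) * J ∈ W := by
    intro α β hX
    set X := α • w + β • (w * J) with hXdef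
    have hXJ : J * X = -(X * J) := by
      simp only [hXdef, Matrix.mul_add, Matrix.add_mul, Matrix.mul_smul, Matrix.smul_mul, ← Matrix.mul_assoc, hJw,
        Matrix.neg_mul]
      module
    have hn : (x ^ 2 - d * y ^ 2) • c' = x • 1 - y • J := by
      have h : c * (x • 1 - y • J) = (x ^ 2 - d * y ^ 2) • 1 := by
        simp only [hc, Matrix.mul_sub, Matrix.add_mul, Matrix.mul_smul, Matrix.smul_mul, hJ,
          Matrix.mul_one, Matrix.one_mul]
        module
      have := congrArg (c' * ·) h
      simp only [← Matrix.mul_assoc, hc'] at this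
      simpa using this.symm
    have h1 := W.smul_mem (x ^ 2 - d * y ^ 2) (hWc X hX)
    have h2' : (x ^ 2 - d * y ^ 2) • (c * X * c') =
        (x ^ 2 + d * y ^ 2) • X - (2 * x * y) • (X * J) := by
      rw [← Matrix.mul_smul, hn, hc]
      simp only [Matrix.mul_sub, Matrix.add_mul, Matrix.mul_smul, Matrix.smul_mul, 
          Matrix.mul_one, Matrix.one_mul, hXJ, Matrix.neg_mul]
      rw [Matrix.mul_assoc X, hJ]
      simp only [Matrix.mul_smul, Matrix.mul_one]
      module
    rw [h2'] at h1
    have h3 := W.sub_mem (W.smul_mem (x ^ 2 + d * y ^ 2) hX) h1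
    rw [sub_sub_cancel] at h3
    exact (W.smul_mem_iff (by simp [h2, hx, hy])).1 h3
  -- conjugation by `w` fixes `w` and negates `wJ`
  have key2 : ∀ α β : F, α • w + β • (w * J) ∈ W → α • w ∈ W ∧ β • (w * J) ∈ W := by
    intro α β hX
    have h := hWw _ hX
    have h' : w * (α • w + β • (w * J)) * w = e • (α • w - β • (w * J)) := by
      simp only [Matrix.mul_add, Matrix.add_mul, Matrix.mul_smul, Matrix.smul_mul,
        ← Matrix.mul_assoc, hw]
      simp [hJw]
      module
    rw [h', W.smul_mem_iff he] at h
    constructor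
    · have := W.add_mem hX h
      rw [← W.smul_mem_iff h2]
      convert this using 1
      module
    · have := W.sub_mem hX h
      rw [← W.smul_mem_iff h2]
      convert this using 1
      module
  have hV : w ∈ W ∧ w * J ∈ W := by
    by_cases h0 : f w = 0 ∧ f (w * J) = 0
    · rw [hker]; exact h0
    have hX : f (w * J) • w + (- f w) • (w * J) ∈ W := by
      rw [hker]; simp [mul_comm]
    obtain ⟨ha, hb⟩ := key2 _ _ hX
    by_cases h1 : f w = 0
    · have h2' : f (w * J) ≠ 0 := fun h => h0 ⟨h1, h⟩
      rw [W.smul_mem_iff h2'] at ha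
      exact ⟨ha, by simpa using key 1 0 (by simpa using ha)⟩
    · rw [W.smul_mem_iff (neg_ne_zero.2 h1)] at hb
      refine ⟨?_, hb⟩
      have := key 0 1 (by simpa using hb)
      simp only [zero_smul, one_smul, zero_add, Matrix.mul_assoc, hJ, Matrix.mul_smul,
        Matrix.mul_one] at this
      exact (W.smul_mem_iff hd).1 this
  refine ⟨?_, hV⟩
  obtain ⟨Y, hY, hYt⟩ := htr
  obtain ⟨s, t, α, β, hs, hYe⟩ := core_span h2 hd he hJ hw hwJ Y
  have h1 : s • 1 + t • J ∈ W := by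
    have := W.sub_mem (W.sub_mem hY (W.smul_mem β hV.2)) (W.smul_mem α hV.1)
    convert this using 1
    rw [hYe]; module
  have h := hWw _ h1
  have h' : w * (s • 1 + t • J) * w = e • (s • 1 - t • J) := by
    simp only [Matrix.mul_add, Matrix.add_mul, Matrix.mul_smul, Matrix.smul_mul, Matrix.mul_one, hw]
    rw [Matrix.mul_assoc, hJw, Matrix.mul_neg, ← Matrix.mul_assoc, hw]
    simp
    module
  rw [h', W.smul_mem_iff he] at h
  have h3 := W.add_mem h1 h
  have : s • (1 : Matrix (Fin 2) (Fin 2) F) + t • J + (s • 1 - t • J) = Y.trace • 1 := by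
    rw [← hs]; module
  rw [this] at h3
  exact (W.smul_mem_iff hYt).1 h3
end CoreAlgebra

/-! ### The graded pieces `𝔤ₙ` -/

section GroupPart

variable {p : ℕ} [Fact p.Prime]

theorem two_ne_zero_of_odd (hp : Odd p) : (2 : ZMod p) ≠ 0 := by
  intro h
  have := (ZMod.natCast_eq_zero_iff 2 p).1 (by exact_mod_cast h)
  have h3 := (Nat.prime_dvd_prime_iff_eq Fact.out Nat.prime_two).1 this
  subst h3
  exact absurd hp (by decide)

/-- Reduction of matrix entries modulo `p`, as a ring homomorphism. -/
def redMat (p : ℕ) [Fact p.Prime] :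
    Matrix (Fin 2) (Fin 2) ℤ_[p] →+* Matrix (Fin 2) (Fin 2) (ZMod p) :=
  (PadicInt.toZMod (p := p)).mapMatrix

theorem redMat_smul (a : ℤ_[p]) (B : Matrix (Fin 2) (Fin 2) ℤ_[p]) :
    redMat p (a • B) = PadicInt.toZMod a • redMat p B := by
  ext i j
  simp [redMat]

theorem toZMod_p : PadicInt.toZMod (p : ℤ_[p]) = 0 := by simp

theorem coe_red (A : GL (Fin 2) ℤ_[p]) :
    (red p A : Matrix (Fin 2) (Fin 2) (ZMod p)) = redMat p A := rfl

theorem toZMod_eq_zero {x : ℤ_[p]} (h : PadicInt.toZMod x = 0) : ∃ y, x = (p : ℤ_[p]) * y := by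
  have : x ∈ RingHom.ker (PadicInt.toZMod (p := p)) := h
  rw [PadicInt.ker_toZMod, PadicInt.maximalIdeal_eq_span_p, Ideal.mem_span_singleton] at this
  exact this

theorem exists_of_redMat_eq_one {A : Matrix (Fin 2) (Fin 2) ℤ_[p]} (h : redMat p A = 1) :
    ∃ B, A = 1 + (p : ℤ_[p]) • B := by
  have h0 : ∀ i j, ∃ y, (A - 1) i j = (p : ℤ_[p]) * y := by
    intro i j
    apply toZMod_eq_zero
    have h' : redMat p (A - 1) = 0 := by rw [map_sub, h, map_one, sub_self]
    exact congrFun (congrFun h' i) j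
  choose B hB using h0
  refine ⟨B, ?_⟩
  ext i j
  have := hB i j
  rw [Matrix.sub_apply, sub_eq_iff_eq_add'] at this
  rw [this]
  rfl

theorem mem_glSet_iff {n : ℕ} {G : Subgroup (GL (Fin 2) ℤ_[p])}
    {M : Matrix (Fin 2) (Fin 2) (ZMod p)} :
    M ∈ glSet p n G ↔ ∃ A ∈ G, ∃ B : Matrix (Fin 2) (Fin 2) ℤ_[p],
      (A : Matrix (Fin 2) (Fin 2) ℤ_[p]) = 1 + ((p : ℤ_[p]) ^ n) • B ∧ redMat p B = M :=
  Iff.rfl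

/-- `𝔤ₙ` as a subspace of `gl₂(𝔽_p)`. Closure under addition comes from
`(1 + pⁿB)(1 + pⁿB') ≡ 1 + pⁿ(B + B')` modulo `p²ⁿ`. -/
def glSub {n : ℕ} (hn : 1 ≤ n) (G : Subgroup (GL (Fin 2) ℤ_[p])) :
    Submodule (ZMod p) (Matrix (Fin 2) (Fin 2) (ZMod p)) :=
  AddSubgroup.toZModSubmodule p
    { carrier := glSet p n G
      zero_mem' := ⟨1, G.one_mem, 0, by simp, by simp⟩
      add_mem' := by
        rintro _ _ ⟨A, hA, B, hAB, rfl⟩ ⟨A', hA', B', hAB', rfl⟩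
        refine mem_glSet_iff.2 ⟨A * A', G.mul_mem hA hA', B + B' + (p : ℤ_[p]) ^ n • (B * B'), ?_, ?_⟩
        · rw [Units.val_mul, hAB, hAB']
          simp only [Matrix.mul_add, Matrix.add_mul, Matrix.mul_smul, Matrix.smul_mul,
            Matrix.mul_one, Matrix.one_mul]
          module
        · rw [map_add, map_add, redMat_smul, map_pow, toZMod_p, zero_pow (by omega), zero_smul,
            add_zero]
          rfl
      neg_mem' := by
        rintro _ ⟨A, hA, B, hAB, rfl⟩
        refine mem_glSet_iff.2 ⟨A⁻¹, G.inv_mem hA, -(((A⁻¹ : GL (Fin 2) ℤ_[p]) : Matrix _ _ _) * B), ?_, ?_⟩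
        · have h : ((A⁻¹ : GL (Fin 2) ℤ_[p]) : Matrix (Fin 2) (Fin 2) ℤ_[p]) * A = 1 := by
            rw [← Units.val_mul]; simp
          have h' := congrArg ((A⁻¹ : GL (Fin 2) ℤ_[p]).val * ·) hAB
          simp only [h, Matrix.mul_add, Matrix.mul_one, Matrix.mul_smul] at h'
          rw [h', smul_neg, add_neg_cancel_right]
        · have h : ((A⁻¹ : GL (Fin 2) ℤ_[p]) : Matrix (Fin 2) (Fin 2) ℤ_[p]) * A = 1 := by
            rw [← Units.val_mul]; simp
          have hA1 : redMat p A = 1 := by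
            rw [hAB, map_add, redMat_smul, map_pow, toZMod_p, zero_pow (by omega), zero_smul,
              add_zero, map_one]
          have h' := congrArg (redMat p) h
          rw [map_mul, hA1, mul_one, map_one] at h'
          rw [map_neg, map_mul, h', one_mul]
          rfl }

theorem mem_glSub {n : ℕ} (hn : 1 ≤ n) {G : Subgroup (GL (Fin 2) ℤ_[p])}
    {M : Matrix (Fin 2) (Fin 2) (ZMod p)} : M ∈ glSub hn G ↔ M ∈ glSet p n G := Iff.rfl

theorem glDim_eq {n : ℕ} (hn : 1 ≤ n) (G : Subgroup (GL (Fin 2) ℤ_[p])) :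
    glDim p n G = Module.finrank (ZMod p) (glSub hn G) := by
  have : Submodule.span (ZMod p) (glSet p n G) = glSub hn G :=
    Submodule.span_eq (glSub hn G)
  rw [glDim, this]

theorem red_eq_one_of_eq {n : ℕ} (hn : 1 ≤ n) {A B : Matrix (Fin 2) (Fin 2) ℤ_[p]}
    (h : A = 1 + ((p : ℤ_[p]) ^ n) • B) : redMat p A = 1 := by
  rw [h, map_add, redMat_smul, map_pow, toZMod_p, zero_pow (by omega), zero_smul,
    add_zero, map_one]

theorem glSet_conj {n : ℕ} {G : Subgroup (GL (Fin 2) ℤ_[p])} {h : GL (Fin 2) ℤ_[p]}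
    (hh : h ∈ G) {M : Matrix (Fin 2) (Fin 2) (ZMod p)} (hM : M ∈ glSet p n G) :
    (red p h).val * M * (red p h)⁻¹.val ∈ glSet p n G := by
  obtain ⟨A, hA, B, hAB, rfl⟩ := hM
  refine mem_glSet_iff.2 ⟨h * A * h⁻¹, G.mul_mem (G.mul_mem hh hA) (G.inv_mem hh),
    h.val * B * h⁻¹.val, ?_, ?_⟩
  · rw [Units.val_mul, Units.val_mul, hAB, Matrix.mul_add, Matrix.add_mul, Matrix.mul_one,
      ← Units.val_mul, mul_inv_cancel]
    simp
  · rw [map_mul, map_mul, ← map_inv]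
    rfl

/-- Group commutators induce the Lie bracket `𝔤₁ × 𝔤₁ → 𝔤₂`. -/
theorem glSet_comm {G : Subgroup (GL (Fin 2) ℤ_[p])} {M N : Matrix (Fin 2) (Fin 2) (ZMod p)}
    (hM : M ∈ glSet p 1 G) (hN : N ∈ glSet p 1 G) : M * N - N * M ∈ glSet p 2 G := by
  obtain ⟨A, hA, X, hAX, rfl⟩ := hM
  obtain ⟨B, hB, Y, hBY, rfl⟩ := hN
  refine mem_glSet_iff.2 ⟨A * B * (B * A)⁻¹, G.mul_mem (G.mul_mem hA hB)
    (G.inv_mem (G.mul_mem hB hA)), (X * Y - Y * X) * (B * A)⁻¹.val, ?_, ?_⟩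
  · have h : (A * B).val = (B * A).val + (p : ℤ_[p]) ^ 2 • (X * Y - Y * X) := by
      rw [Units.val_mul, Units.val_mul, hAX, hBY]
      simp only [Matrix.mul_add, Matrix.add_mul, Matrix.mul_smul, Matrix.smul_mul,
            Matrix.mul_one, Matrix.one_mul]
      module
    rw [Units.val_mul, h, Matrix.add_mul, ← Units.val_mul, mul_inv_cancel]
    simp
  · have h1 : red p (B * A) = 1 := by
      ext1
      rw [map_mul, Units.val_mul, coe_red, coe_red, red_eq_one_of_eq le_rfl hAX,
        red_eq_one_of_eq le_rfl hBY]
      simp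
    have h2 : redMat p (B * A)⁻¹.val = 1 := by
      rw [← coe_red, map_inv, h1]; simp
    rw [map_mul, h2, mul_one, map_sub, map_mul, map_mul]
    rfl

theorem one_add_pow_expand {R : Type*} [Ring R] (X : R) (m : ℕ) :
    ∃ r : R, (1 + X) ^ m = 1 + (m : R) * X + (m.choose 2 : R) * X ^ 2 + X ^ 3 * r := by
  induction m with
  | zero => exact ⟨0, by simp⟩
  | succ m ih =>
    obtain ⟨r, hr⟩ := ih
    refine ⟨(m.choose 2 : R) + r + X * r, ?_⟩
    rw [pow_succ', hr, Nat.choose_succ_succ' m 1, Nat.choose_one_right]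
    have h1 : X * ((m : R) * X) = (m : R) * X ^ 2 := by
      rw [← mul_assoc, ← Nat.cast_comm, mul_assoc, pow_two]
    have h2 : X * ((m.choose 2 : R) * X ^ 2) = X ^ 3 * (m.choose 2 : R) := by
      rw [← mul_assoc, ← Nat.cast_comm, mul_assoc, ← pow_succ', Nat.cast_comm]
    have h3 : X * (X ^ 3 * r) = X ^ 3 * (X * r) := by
      rw [← mul_assoc, ← mul_assoc, ← pow_succ', pow_succ]
    rw [add_mul, one_mul, mul_add, mul_add, mul_add, h1, h2, h3]
    push_cast
    noncomm_ring

/-- Taking `p`-th powers embeds `𝔤ₙ` in `𝔤ₙ₊₁`; oddness of `p` makes the quadratic term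
`p(p-1)/2 · p²ⁿB²` negligible modulo `pⁿ⁺²`. -/
theorem glSet_succ (hp : Odd p) {n : ℕ} (hn : 1 ≤ n) {G : Subgroup (GL (Fin 2) ℤ_[p])}
    {M : Matrix (Fin 2) (Fin 2) (ZMod p)} (hM : M ∈ glSet p n G) : M ∈ glSet p (n + 1) G := by
  obtain ⟨A, hA, B, hAB, rfl⟩ := hM
  obtain ⟨k, hk⟩ := hp
  obtain ⟨m, rfl⟩ : ∃ m, n = m + 1 := ⟨n - 1, by omega⟩
  obtain ⟨r, hr⟩ := one_add_pow_expand ((p : ℤ_[p]) ^ (m + 1) • B) p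
  have hch : p.choose 2 = p * k := by
    rw [Nat.choose_two_right]
    have : p - 1 = 2 * k := by omega
    rw [this, mul_left_comm]
    simp
  refine mem_glSet_iff.2 ⟨A ^ p, G.pow_mem hA p,
    B + (p : ℤ_[p]) • (((p : ℤ_[p]) ^ m * k) • (B * B) + ((p : ℤ_[p]) ^ (2 * m)) • (B * B * B * r)), ?_, ?_⟩
  · rw [Units.val_pow_eq_pow_val, hAB, hr, hch]
    have hc : ∀ (a : ℕ) (Z : Matrix (Fin 2) (Fin 2) ℤ_[p]),
        (a : Matrix (Fin 2) (Fin 2) ℤ_[p]) * Z = (a : ℤ_[p]) • Z := by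
      intro a Z
      rw [← nsmul_eq_mul, Nat.cast_smul_eq_nsmul]
    rw [hc, hc, smul_pow, smul_pow, Matrix.smul_mul, pow_two B, pow_succ B 2, pow_two B]
    push_cast
    module
  · rw [map_add, redMat_smul, toZMod_p, zero_smul, add_zero]
    rfl

theorem glSet_mono (hp : Odd p) {G : Subgroup (GL (Fin 2) ℤ_[p])}
    {M : Matrix (Fin 2) (Fin 2) (ZMod p)} {m n : ℕ} (hm : 1 ≤ m) (hn : m ≤ n)
    (hM : M ∈ glSet p m G) : M ∈ glSet p n G := by
  induction n, hn using Nat.le_induction with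
  | base => exact hM
  | succ k hk ih => exact glSet_succ hp (by omega) ih

/-! ### An element of nonzero trace in `𝔤₁` -/

theorem pow_sq_eq {J : Matrix (Fin 2) (Fin 2) (ZMod p)} {d : ZMod p}
    (hp : Odd p) (hd : d ≠ 0) (hJ : J * J = d • 1) (s t : ZMod p) :
    (s • 1 + t • J) ^ (p ^ 2) = s • 1 + t • J := by
  obtain ⟨k, hk⟩ := hp
  have hs : ∀ a : ZMod p, a ^ p = a := fun a => ZMod.pow_card a
  have hJ2 : J ^ 2 = d • 1 := by rw [pow_two, hJ]
  have hJp : J ^ p = d ^ k • J := by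
    have h : J ^ p = J ^ (2 * k + 1) := congrArg (J ^ ·) hk
    rw [h, pow_succ, pow_mul, hJ2, smul_pow, one_pow]
    simp
  have hdk : d ^ k * d ^ k = 1 := by
    rw [← pow_add, show k + k = p - 1 by omega]
    exact ZMod.pow_card_sub_one_eq_one hd
  have step : ∀ a b : ZMod p, (a • 1 + b • J) ^ p = a • 1 + (b * d ^ k) • J := by
    intro a b
    have hcomm : Commute (a • (1 : Matrix (Fin 2) (Fin 2) (ZMod p))) (b • J) :=
      ((Commute.one_left J).smul_left a).smul_right b
    rw [add_pow_char_of_commute (p := p) hcomm, smul_pow, smul_pow, one_pow, hJp, hs, hs, smul_smul]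
  rw [pow_two, pow_mul, step, step, mul_assoc, hdk, mul_one]

/-- If squares of elements of `G(p)` lie in `𝔽_p[J]` (where `z ^ p² = z`), surjectivity of the
determinant yields an element of nonzero trace in `𝔤₁`: for `A ∈ G` of determinant `1 + p`,
the element `A ^ (2 p² - 2)` is `1 + pB` with `tr B ≡ -2`. -/
theorem exists_trace_ne_zero (hp : Odd p) {G : Subgroup (GL (Fin 2) ℤ_[p])}
    (hdet : ∀ u : ℤ_[p]ˣ, ∃ A ∈ G, Matrix.GeneralLinearGroup.det A = u)
    {J : Matrix (Fin 2) (Fin 2) (ZMod p)} {d : ZMod p} (hd : d ≠ 0) (hJ : J * J = d • 1)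
    (hsq : ∀ A ∈ G, ∃ s t : ZMod p, (red p A).val * (red p A).val = s • 1 + t • J) :
    ∃ X ∈ glSet p 1 G, X.trace ≠ 0 := by
  have h2 : (2 : ZMod p) ≠ 0 := two_ne_zero_of_odd hp
  have hu : IsUnit (1 + (p : ℤ_[p])) := by
    by_contra hcon
    have h1 : (1 + (p : ℤ_[p])) ∈ IsLocalRing.maximalIdeal ℤ_[p] := hcon
    rw [← PadicInt.ker_toZMod, RingHom.mem_ker, map_add, toZMod_p] at h1
    simp at h1
  obtain ⟨u, hu⟩ := hu
  obtain ⟨A, hA, hAu⟩ := hdet u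
  have hAd : (A : Matrix (Fin 2) (Fin 2) ℤ_[p]).det = 1 + p := by
    rw [← hu, ← hAu]; rfl
  obtain ⟨s, t, hst⟩ := hsq A hA
  set D := (A * A) ^ (p ^ 2) * (A * A)⁻¹ with hD
  have hDG : D ∈ G :=
    G.mul_mem (G.pow_mem (G.mul_mem hA hA) _) (G.inv_mem (G.mul_mem hA hA))
  have hDA : D * (A * A) = (A * A) ^ (p ^ 2) := by rw [hD, inv_mul_cancel_right]
  have hDr : red p D = 1 := by
    have h : red p (A * A) ^ (p ^ 2) = red p (A * A) := by
      ext1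
      rw [Units.val_pow_eq_pow_val, map_mul, Units.val_mul, hst]
      exact pow_sq_eq hp hd hJ s t
    rw [hD, map_mul, map_pow, h, map_inv, mul_inv_cancel]
  obtain ⟨B, hB⟩ := exists_of_redMat_eq_one (A := D.val) (by rw [← coe_red, hDr]; rfl)
  refine ⟨redMat p B, mem_glSet_iff.2 ⟨D, hDG, B, by simpa using hB, rfl⟩, ?_⟩
  have hdD : D.val.det = 1 + p * B.trace + p ^ 2 * B.det := by
    rw [hB, Matrix.det_fin_two, Matrix.trace_fin_two, Matrix.det_fin_two]
    simp
    ring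
  have hrel : D.val.det * (1 + (p : ℤ_[p])) ^ 2 = ((1 + (p : ℤ_[p])) ^ 2) ^ (p ^ 2) := by
    have := congrArg (fun g : GL (Fin 2) ℤ_[p] => g.val.det) hDA
    simp only [Units.val_mul, Units.val_pow_eq_pow_val, Matrix.det_mul, Matrix.det_pow, hAd] at this
    rw [pow_two (1 + (p : ℤ_[p])), this]
  have hdiv : (p : ℤ_[p]) ^ 3 ∣ ((1 + (p : ℤ_[p])) ^ 2) ^ (p ^ 2) - 1 ^ (p ^ 2) :=
    dvd_sub_pow_of_dvd_sub (show (p : ℤ_[p]) ∣ (1 + (p : ℤ_[p])) ^ 2 - 1 from ⟨2 + p, by ring⟩) 2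
  obtain ⟨q, hq⟩ := hdiv
  rw [← hrel, hdD, one_pow] at hq
  have hp0 : (p : ℤ_[p]) ≠ 0 := by exact_mod_cast (Fact.out : p.Prime).ne_zero
  have hval : B.trace + 2 = p * (p * q - (1 + 2 * B.trace + p * B.trace) - B.det * (1 + p) ^ 2) := by
    apply mul_left_cancel₀ hp0
    linear_combination hq
  have htr : (redMat p B).trace = PadicInt.toZMod B.trace := by
    simp [redMat, Matrix.trace_fin_two]
  intro h0
  have := congrArg (PadicInt.toZMod (p := p)) hval
  rw [map_add, ← htr, h0, map_mul, toZMod_p, zero_mul, zero_add, map_ofNat] at this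
  exact h2 this

/-! ### The dimension of `𝔤ₙ` -/

/-- The dimension statement in terms of lifts `c, w ∈ G` of `x + yJ` and of an element
anticommuting with `J`. -/
theorem glDim_aux (hp : Odd p) {G : Subgroup (GL (Fin 2) ℤ_[p])}
    (hdet : ∀ u : ℤ_[p]ˣ, ∃ A ∈ G, Matrix.GeneralLinearGroup.det A = u)
    {J : Matrix (Fin 2) (Fin 2) (ZMod p)} {d e x y : ZMod p} (hd : d ≠ 0) (hJ : J * J = d • 1)
    (hsq : ∀ A ∈ G, ∃ s t : ZMod p, (red p A).val * (red p A).val = s • 1 + t • J)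
    {c w : GL (Fin 2) ℤ_[p]} (hcG : c ∈ G) (hwG : w ∈ G)
    (hc : (red p c).val = x • 1 + y • J) (hx : x ≠ 0) (hy : y ≠ 0)
    (hw : (red p w).val * (red p w).val = e • 1)
    (hwJ : (red p w).val * J = -(J * (red p w).val))
    (h1 : glDim p 1 G = 3) (n : ℕ) (hn : 1 < n) : glDim p n G = 4 := by
  have h2 : (2 : ZMod p) ≠ 0 := two_ne_zero_of_odd hp
  have he : e ≠ 0 := by
    rintro rfl
    have h := congrArg ((red p w)⁻¹.val * ·) hw
    simp at h
  have hww : (red p w).val = e • (red p w)⁻¹.val := by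
    have h := congrArg ((red p w)⁻¹.val * ·) hw
    simpa using h
  rw [glDim_eq le_rfl] at h1
  obtain ⟨m1, mw, mwJ⟩ := core_mem (c := (red p c).val) (c' := (red p c)⁻¹.val) h2 hd he hJ hw hwJ
    hc hx hy (by rw [← Units.val_mul]; simp) (glSub le_rfl G) h1
    (fun X hX => glSet_conj hcG hX)
    (fun X hX => by
      have h := (glSub le_rfl G).smul_mem e (glSet_conj hwG hX)
      rw [← Matrix.mul_smul, ← hww] at h
      exact h)
    (exists_trace_ne_zero hp hdet hd hJ hsq)
  have hn1 : 1 ≤ n := hn.le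
  -- `[w, wJ] = 2 e J`
  have mJ : J ∈ glSub hn1 G := by
    have h := glSet_mono hp (by norm_num) hn (glSet_comm mw mwJ)
    have h' : (red p w).val * ((red p w).val * J) - (red p w).val * J * (red p w).val
        = (2 * e) • J := by
      have hJw : J * (red p w).val = -((red p w).val * J) := by rw [hwJ, neg_neg]
      rw [Matrix.mul_assoc _ J, hJw, Matrix.mul_neg, ← Matrix.mul_assoc, hw]
      simp
      module
    rw [h'] at h
    exact ((glSub hn1 G).smul_mem_iff (by simp [h2, he])).1 h
  have up : ∀ X ∈ glSub (le_refl 1) G, X ∈ glSub hn1 G :=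
    fun X hX => glSet_mono hp le_rfl hn1 hX
  have htop : glSub hn1 G = ⊤ := by
    rw [eq_top_iff]
    intro Y _
    obtain ⟨s, t, α, β, -, hY⟩ := core_span h2 hd he hJ hw hwJ Y
    rw [hY]
    exact add_mem (add_mem (add_mem (Submodule.smul_mem _ _ (up _ m1)) (Submodule.smul_mem _ _ mJ))
      (Submodule.smul_mem _ _ (up _ mw))) (Submodule.smul_mem _ _ (up _ mwJ))
  rw [glDim_eq hn1, htop]
  simp [Module.finrank_matrix]

end GroupPart

/-- The dimension statement for a pair `C ⊆ C⁺` whose reductions are described by `J`: elements of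
`C` reduce into `𝔽_p[J]`, and the remaining elements of `C⁺` reduce to matrices with scalar square
that anticommute with `J`. -/
theorem glDim_of_cartan {p : ℕ} [Fact p.Prime] (hp : Odd p) {G : Subgroup (GL (Fin 2) ℤ_[p])}
    {C Cplus : Set (GL (Fin 2) ℤ_[p])} {J : Matrix (Fin 2) (Fin 2) (ZMod p)} {d : ZMod p}
    (hd : d ≠ 0) (hJ : J * J = d • 1)
    (hC : ∀ P ∈ C, ∃ s t : ZMod p, (red p P).val = s • 1 + t • J)
    (hCp : ∀ P ∈ Cplus, P ∈ C ∨ ((∃ e : ZMod p, (red p P).val * (red p P).val = e • 1) ∧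
      (red p P).val * J = -(J * (red p P).val)))
    (hG : IsNCartanLift p G C Cplus) (hord : HasLargeOrderElt p G C)
    (h1 : glDim p 1 G = 3) (n : ℕ) (hn : 1 < n) : glDim p n G = 4 := by
  obtain ⟨-, hdet, hGp, hGC, -⟩ := hG
  have hsq' : ∀ s t : ZMod p, (s • 1 + t • J) * (s • 1 + t • J) =
      (s * s + d * t * t) • 1 + (2 * s * t) • J := by
    intro s t
    simp only [Matrix.mul_add, Matrix.add_mul, Matrix.mul_smul, Matrix.smul_mul,
      Matrix.mul_one, Matrix.one_mul, hJ]
    module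
  have hsq : ∀ A ∈ G, ∃ s t : ZMod p, (red p A).val * (red p A).val = s • 1 + t • J := by
    intro A hA
    obtain ⟨P, hP, hPA⟩ := hGp ⟨A, hA, rfl⟩
    rw [← hPA]
    rcases hCp P hP with h | ⟨⟨e, he⟩, -⟩
    · obtain ⟨s, t, hst⟩ := hC P h
      exact ⟨_, _, by rw [hst, hsq']⟩
    · exact ⟨e, 0, by rw [he]; simp⟩
  obtain ⟨w, hwG, e, hwe, hwJ⟩ : ∃ w ∈ G, ∃ e : ZMod p,
      (red p w).val * (red p w).val = e • 1 ∧ (red p w).val * J = -(J * (red p w).val) := by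
    obtain ⟨_, ⟨w, hw, rfl⟩, hwC⟩ := Set.not_subset.1 hGC
    obtain ⟨P, hP, hPA⟩ := hGp ⟨w, hw, rfl⟩
    rcases hCp P hP with h | ⟨⟨e, he⟩, hPJ⟩
    · exact absurd ⟨P, h, hPA⟩ hwC
    · rw [hPA] at he hPJ
      exact ⟨w, hw, e, he, hPJ⟩
  obtain ⟨g, ⟨⟨c, hcG, hcg⟩, P, hP, hPg⟩, hgo⟩ := hord
  obtain ⟨x, y, hxy⟩ := hC P hP
  rw [hPg] at hxy
  -- if `x y = 0`, then `g²` is scalar and the order of `g` in `PGL₂` is at most `2`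
  have hne : x * y ≠ 0 := by
    intro h0
    have hgg : (g * g).val = (x * x + d * y * y) • 1 := by
      rw [Units.val_mul, hxy, hsq', mul_assoc 2, h0]
      simp
    have hcen : g * g ∈ Subgroup.center (GL (Fin 2) (ZMod p)) := by
      rw [Subgroup.mem_center_iff]
      intro k
      ext1
      rw [Units.val_mul k, Units.val_mul (g * g), hgg]
      simp
    have hq : (QuotientGroup.mk g :
        GL (Fin 2) (ZMod p) ⧸ Subgroup.center (GL (Fin 2) (ZMod p))) ^ 2 = 1 := by
      rw [← QuotientGroup.mk_pow, pow_two]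
      exact (QuotientGroup.eq_one_iff _).2 hcen
    exact absurd (orderOf_le_of_pow_eq_one (by norm_num) hq) (by omega)
  exact glDim_aux hp hdet hd hJ hsq hcG hwG (by rw [hcg, hxy]) (left_ne_zero_of_mul hne)
    (right_ne_zero_of_mul hne) hwe hwJ h1 n hn

theorem epsN_ne_zero {p : ℕ} [Fact p.Prime] (hp : Odd p) : ((epsN p : ℕ) : ZMod p) ≠ 0 := by
  have hne : {n : ℕ | 0 < n ∧ ¬ IsSquare ((n : ZMod p))}.Nonempty := by
    have hc : ringChar (ZMod p) ≠ 2 := by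
      rw [ZMod.ringChar_zmod_n]
      rintro rfl
      exact absurd hp (by decide)
    obtain ⟨a, ha⟩ := FiniteField.exists_nonsquare hc
    refine ⟨a.val, ?_, ?_⟩
    · rw [Nat.pos_iff_ne_zero, ne_eq, ZMod.val_eq_zero]
      rintro rfl
      exact ha (IsSquare.zero)
    · rwa [ZMod.natCast_zmod_val]
  have h := Nat.sInf_mem hne
  intro h0
  apply h.2
  change IsSquare ((epsN p : ℕ) : ZMod p)
  rw [h0]
  exact IsSquare.zero

/-- **(Lemma 3.9(2).)** Let `G` be an N-Cartan lift with respect to `C` such that the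
image of `G(p) ∩ C(p)` in `PGL₂(𝔽_p)` contains an element of order greater than `2`.
If `dim 𝔤₁ = 3`, then `dim 𝔤ₙ = 4` for every `n > 1`. -/
theorem glDim_of_dim_one_eq_three
    (p : ℕ) [Fact p.Prime] (hp : Odd p)
    (G : Subgroup (GL (Fin 2) ℤ_[p]))
    (C Cplus : Set (GL (Fin 2) ℤ_[p]))
    (hC : (C = cspSet ℤ_[p] ∧ Cplus = cspPlusSet ℤ_[p]) ∨
          (C = cnsSet ℤ_[p] ((epsN p : ℤ_[p])) ∧ Cplus = cnsPlusSet ℤ_[p] ((epsN p : ℤ_[p]))))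
    (hG : IsNCartanLift p G C Cplus)
    (hord : HasLargeOrderElt p G C)
    (h1 : glDim p 1 G = 3) :
    ∀ n : ℕ, 1 < n → glDim p n G = 4 := by
  have h2 : (2 : ZMod p) ≠ 0 := two_ne_zero_of_odd hp
  rcases hC with ⟨rfl, rfl⟩ | ⟨rfl, rfl⟩
  · refine glDim_of_cartan (J := !![1, 0; 0, -1]) (d := 1) hp one_ne_zero ?_ ?_ ?_ hG hord h1
    · ext i j; fin_cases i <;> fin_cases j <;> simp
    · rintro P ⟨a, b, hP⟩
      refine ⟨(PadicInt.toZMod a + PadicInt.toZMod b) / 2,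
        (PadicInt.toZMod a - PadicInt.toZMod b) / 2, ?_⟩
      rw [coe_red, hP]
      ext i j
      fin_cases i <;> fin_cases j <;> simp [redMat] <;> field_simp <;> ring
    · rintro P ⟨a, b, hP | hP⟩
      · exact Or.inl ⟨a, b, hP⟩
      · right
        rw [coe_red, hP]
        refine ⟨⟨PadicInt.toZMod a * PadicInt.toZMod b, ?_⟩, ?_⟩
        · ext i j
          fin_cases i <;> fin_cases j <;> simp [redMat, Matrix.mul_apply, Fin.sum_univ_two, mul_comm]
        · ext i j
          fin_cases i <;> fin_cases j <;> simp [redMat, Matrix.mul_apply, Matrix.vecMul, dotProduct, Fin.sum_univ_two]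
  · refine glDim_of_cartan (J := !![0, (epsN p : ZMod p); 1, 0]) (d := (epsN p : ZMod p)) hp
      (epsN_ne_zero hp) ?_ ?_ ?_ hG hord h1
    · ext i j; fin_cases i <;> fin_cases j <;> simp
    · rintro P ⟨a, b, hP⟩
      refine ⟨PadicInt.toZMod a, PadicInt.toZMod b, ?_⟩
      rw [coe_red, hP]
      ext i j
      fin_cases i <;> fin_cases j <;> simp [redMat, mul_comm]
    · rintro P ⟨a, b, hP | hP⟩
      · exact Or.inl ⟨a, b, hP⟩
      · right
        rw [coe_red, hP]
        refine ⟨⟨PadicInt.toZMod a ^ 2 - (epsN p : ZMod p) * PadicInt.toZMod b ^ 2, ?_⟩, ?_⟩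
        · ext i j
          fin_cases i <;> fin_cases j <;> simp [redMat, Matrix.mul_apply, Fin.sum_univ_two] <;> ring
        · ext i j
          fin_cases i <;> fin_cases j <;>
            simp [redMat, Matrix.mul_apply, Matrix.vecMul, dotProduct, Fin.sum_univ_two] <;> ring

end
end

section
/- Let G ≤ GL₂(ℤ_p) be an N-Cartan lift with respect to the Cartan subgroup C such that dim 𝔤₁ > 1, and suppose there exists an element of G(p) ∩ C(p) whose image in PGL₂(𝔽_p) has order greater than 2. If for some n ≥ 1 one has dim 𝔤ₙ = 4, then G contains the principal congruence subgroup I + pⁿ·M₂(ℤ_p). -/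
/-!
Since `n ≥ 1`, multiplication in `G` induces addition on `𝔤ₙ`, so `𝔤ₙ` is an `𝔽_p`-subspace and
`dim 𝔤ₙ = 4` forces `𝔤ₙ = gl₂(𝔽_p)` (`glSet_eq_univ`). For odd `p` and `m ≥ 1`,
`(I + pᵐB)ᵖ ≡ I + pᵐ⁺¹B (mod pᵐ⁺²)`, so `𝔤ₘ ⊆ 𝔤ₘ₊₁` (`glSet_subset_succ`) and every `𝔤ₘ` with
`m ≥ n` is the whole of `gl₂(𝔽_p)`. A matrix in `I + pⁿ·M₂(ℤ_p)` can therefore be approximated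
by elements of `G` to arbitrary `p`-adic precision (`exists_approx`), and it belongs to `G`
because `G` is closed.
-/

open Matrix

noncomputable section

variable (p : ℕ) [Fact p.Prime]

lemma add_mem_glSet {n : ℕ} (hn : 1 ≤ n) {G : Subgroup (GL (Fin 2) ℤ_[p])}
    {M N : Matrix (Fin 2) (Fin 2) (ZMod p)} (hM : M ∈ glSet p n G) (hN : N ∈ glSet p n G) :
    M + N ∈ glSet p n G := by
  obtain ⟨A, hA, B, hAB, rfl⟩ := hM
  obtain ⟨A', hA', B', hAB', rfl⟩ := hN
  refine ⟨A * A', G.mul_mem hA hA', B + B' + (p : ℤ_[p]) ^ n • (B * B'), ?_, ?_⟩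
  · rw [Units.val_mul, hAB, hAB']
    simp only [mul_add, add_mul, one_mul, mul_one, smul_add, Matrix.smul_mul, Matrix.mul_smul]
    abel
  · ext i j
    have : n ≠ 0 := by omega
    simp [this]

lemma zero_mem_glSet (n : ℕ) (G : Subgroup (GL (Fin 2) ℤ_[p])) : 0 ∈ glSet p n G :=
  ⟨1, G.one_mem, 0, by simp, by ext; simp⟩

lemma glSet_eq_univ {n : ℕ} (hn : 1 ≤ n) {G : Subgroup (GL (Fin 2) ℤ_[p])}
    (h4 : glDim p n G = 4) : glSet p n G = Set.univ := by
  have htop : Submodule.span (ZMod p) (glSet p n G) = ⊤ := by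
    apply Submodule.eq_top_of_finrank_eq
    rw [Module.finrank_matrix]
    simpa [glDim] using h4
  refine Set.eq_univ_of_forall fun M => ?_
  have hM : M ∈ Submodule.span (ZMod p) (glSet p n G) := htop ▸ Submodule.mem_top
  induction hM using Submodule.span_induction with
  | mem x h => exact h
  | zero => exact zero_mem_glSet p n G
  | add x y _ _ hx hy => exact add_mem_glSet p hn hx hy
  | smul c x _ hx =>
    -- scalars of `𝔽_p` act as natural numbers, i.e. by iterated addition
    have key : ∀ k : ℕ, k • x ∈ glSet p n G := by
      intro k
      induction k with
      | zero => simpa using zero_mem_glSet p n G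
      | succ k ih => rw [succ_nsmul]; exact add_mem_glSet p hn ih hx
    have := key c.val
    rwa [← Nat.cast_smul_eq_nsmul (ZMod p), ZMod.natCast_zmod_val] at this

/-- Binomial expansion to second order. -/
lemma one_add_pow_eq {R : Type*} [Ring R] (x : R) (k : ℕ) :
    ∃ r : R, (1 + x) ^ k = 1 + (k : R) * x + (k.choose 2 : R) * x ^ 2 + x ^ 3 * r := by
  induction k with
  | zero => exact ⟨0, by simp⟩
  | succ k ih =>
    obtain ⟨r, hr⟩ := ih
    refine ⟨r * (1 + x) + (k.choose 2 : R), ?_⟩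
    rw [pow_succ, hr, Nat.choose_succ_succ' k 1, Nat.choose_one_right]
    have h1 := Nat.cast_comm k x
    have h2 := Nat.cast_comm (k.choose 2) x
    have h3 := Nat.cast_comm (k.choose 2) (x ^ 3)
    push_cast
    rw [mul_add (x ^ 3), ← h3]
    noncomm_ring

/-- The `p`-th power map sends `I + pᵐB` to `I + pᵐ⁺¹B` modulo `pᵐ⁺²`; this uses that `p` is odd,
so that `p` divides the binomial coefficient of the quadratic term. -/
lemma glSet_subset_succ (hp : Odd p) {m : ℕ} (hm : 1 ≤ m) (G : Subgroup (GL (Fin 2) ℤ_[p])) :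
    glSet p m G ⊆ glSet p (m + 1) G := by
  rintro M ⟨A, hA, B, hAB, rfl⟩
  obtain ⟨r, hr⟩ := one_add_pow_eq ((p : ℤ_[p]) ^ m • B) p
  obtain ⟨q, hq⟩ := hp
  obtain ⟨l, rfl⟩ : ∃ l, m = l + 1 := ⟨m - 1, by omega⟩
  have hch : p.choose 2 = p * q := by
    rw [Nat.choose_two_right, hq, Nat.add_sub_cancel, mul_left_comm,
      Nat.mul_div_cancel_left _ (by norm_num)]
  refine ⟨A ^ p, G.pow_mem hA p,
    B + (p : ℤ_[p]) • (((q : ℤ_[p]) * (p : ℤ_[p]) ^ l) • B ^ 2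
      + ((p : ℤ_[p]) ^ (2 * l)) • (B ^ 3 * r)), ?_, ?_⟩
  · rw [Units.val_pow_eq_pow_val, hAB, hr, hch, ← nsmul_eq_mul, ← nsmul_eq_mul,
      ← Nat.cast_smul_eq_nsmul ℤ_[p], ← Nat.cast_smul_eq_nsmul ℤ_[p]]
    ext i j
    simp only [smul_pow, Matrix.add_apply, Matrix.smul_apply, smul_eq_mul, Matrix.smul_mul]
    push_cast
    ring
  · ext i j
    simp

/-- If `𝔤ₘ = gl₂(𝔽_p)` for all `m ≥ n`, then any matrix in `I + pⁿ·M₂(ℤ_p)` has, to any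
`p`-adic precision, an inverse in `G`. Each step corrects the error at the next power of `p`. -/
lemma exists_approx {n : ℕ} (hn : 1 ≤ n) {G : Subgroup (GL (Fin 2) ℤ_[p])}
    (hfull : ∀ k, glSet p (n + k) G = Set.univ) (B : Matrix (Fin 2) (Fin 2) ℤ_[p]) (k : ℕ) :
    ∃ g ∈ G, ∃ D : Matrix (Fin 2) (Fin 2) ℤ_[p],
      (1 + (p : ℤ_[p]) ^ n • B) * (g : Matrix (Fin 2) (Fin 2) ℤ_[p])
        = 1 + (p : ℤ_[p]) ^ (n + k) • D := by
  induction k with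
  | zero => exact ⟨1, G.one_mem, B, by simp⟩
  | succ k ih =>
    obtain ⟨g, hg, D, hD⟩ := ih
    obtain ⟨h, hh, D', hhD, hred⟩ : -(D.map (PadicInt.toZMod (p := p))) ∈ glSet p (n + k) G := by
      rw [hfull k]; trivial
    have hdiv : ∃ E : Matrix (Fin 2) (Fin 2) ℤ_[p], D + D' = (p : ℤ_[p]) • E := by
      have : ∀ i j, ∃ e, (D + D') i j = (p : ℤ_[p]) * e := by
        intro i j
        have h0 : PadicInt.toZMod ((D + D') i j) = 0 := by
          have := congrFun (congrFun hred i) j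
          simp only [Matrix.map_apply, Matrix.neg_apply] at this
          simp [this]
        have h1 : (D + D') i j ∈ RingHom.ker (PadicInt.toZMod (p := p)) := h0
        rwa [PadicInt.ker_toZMod, PadicInt.maximalIdeal_eq_span_p,
          Ideal.mem_span_singleton] at h1
      choose E hE using this
      refine ⟨Matrix.of E, ?_⟩
      ext i j
      simp only [hE, Matrix.smul_apply, smul_eq_mul, Matrix.of_apply]
    obtain ⟨E, hE⟩ := hdiv
    obtain ⟨l, rfl⟩ : ∃ l, n = l + 1 := ⟨n - 1, by omega⟩
    refine ⟨g * h, G.mul_mem hg hh, E + (p : ℤ_[p]) ^ (l + k) • (D * D'), ?_⟩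
    rw [Units.val_mul, ← mul_assoc, hD, hhD]
    have hE' : (p : ℤ_[p]) ^ (l + 1 + (k + 1)) • E = (p : ℤ_[p]) ^ (l + 1 + k) • (D + D') := by
      rw [hE, smul_smul, ← add_assoc, pow_succ]
    rw [smul_add, hE']
    simp only [mul_add, add_mul, one_mul, mul_one, smul_add, Matrix.smul_mul, Matrix.mul_smul,
      smul_smul, ← pow_add]
    rw [show l + 1 + (k + 1) + (l + k) = l + 1 + k + (l + 1 + k) by ring]
    abel

lemma tendsto_const_add_smul (n : ℕ) (A : Matrix (Fin 2) (Fin 2) ℤ_[p])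
    (X : ℕ → Matrix (Fin 2) (Fin 2) ℤ_[p]) :
    Filter.Tendsto (fun k => A + (p : ℤ_[p]) ^ (n + k) • X k) Filter.atTop (nhds A) := by
  refine tendsto_pi_nhds.2 fun i => tendsto_pi_nhds.2 fun j => ?_
  have hp1 : ‖(p : ℤ_[p])‖ < 1 := by
    rw [PadicInt.norm_p]
    exact inv_lt_one_of_one_lt₀ (by exact_mod_cast (Fact.out : p.Prime).one_lt)
  have hz : Filter.Tendsto (fun k => (p : ℤ_[p]) ^ (n + k) * X k i j) Filter.atTop (nhds 0) := by
    refine squeeze_zero_norm (a := fun k => ‖(p : ℤ_[p])‖ ^ k) (fun k => ?_)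
      (tendsto_pow_atTop_nhds_zero_of_lt_one (norm_nonneg _) hp1)
    rw [norm_mul, norm_pow]
    calc ‖(p : ℤ_[p])‖ ^ (n + k) * ‖X k i j‖ ≤ ‖(p : ℤ_[p])‖ ^ (n + k) * 1 := by
          gcongr; exact PadicInt.norm_le_one _
      _ ≤ ‖(p : ℤ_[p])‖ ^ k := by
          rw [mul_one]
          exact pow_le_pow_of_le_one (norm_nonneg _) hp1.le (by omega)
  simpa using tendsto_const_nhds.add hz

/-- **(Proposition 3.10(3).)** Let `G` be an N-Cartan lift with respect to `C` with
`dim 𝔤₁ > 1`, and suppose `G(p) ∩ C(p)` contains an element whose image in `PGL₂(𝔽_p)`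
has order greater than `2`.  If `dim 𝔤ₙ = 4` for some `n ≥ 1`, then `G` contains the
principal congruence subgroup `I + pⁿ·M₂(ℤ_p)`. -/
theorem glDim_eq_four_imp
    (p : ℕ) [Fact p.Prime] (hp : Odd p)
    (G : Subgroup (GL (Fin 2) ℤ_[p]))
    (C Cplus : Set (GL (Fin 2) ℤ_[p]))
    (hC : (C = cspSet ℤ_[p] ∧ Cplus = cspPlusSet ℤ_[p]) ∨
          (C = cnsSet ℤ_[p] ((epsN p : ℤ_[p])) ∧ Cplus = cnsPlusSet ℤ_[p] ((epsN p : ℤ_[p]))))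
    (hG : IsNCartanLift p G C Cplus)
    (hdim : 1 < glDim p 1 G)
    (hord : HasLargeOrderElt p G C)
    (n : ℕ) (hn : 1 ≤ n) (h4 : glDim p n G = 4) :
    ∀ B : Matrix (Fin 2) (Fin 2) ℤ_[p], ∃ A ∈ G,
      (A : Matrix (Fin 2) (Fin 2) ℤ_[p]) = 1 + ((p : ℤ_[p]) ^ n) • B := by
  have hfull : ∀ k, glSet p (n + k) G = Set.univ := by
    intro k
    induction k with
    | zero => exact glSet_eq_univ p hn h4
    | succ k ih =>
      exact Set.eq_univ_of_univ_subset (ih ▸ glSet_subset_succ p hp (by omega) G)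
  intro B
  choose g hg D hD using exists_approx p hn hfull B
  have hdet : IsUnit (1 + (p : ℤ_[p]) ^ n • B) := by
    -- invertibility of `1 + pⁿB` holds because its reduction mod `p` is the identity
    rw [Matrix.isUnit_iff_isUnit_det]
    have hmap : (PadicInt.toZMod (p := p)).mapMatrix (1 + (p : ℤ_[p]) ^ n • B) = 1 := by
      have : n ≠ 0 := by omega
      ext i j
      simp [this, Matrix.one_apply, apply_ite]
    by_contra hnu
    have hmem : (1 + (p : ℤ_[p]) ^ n • B).det ∈ RingHom.ker (PadicInt.toZMod (p := p)) := by
      rw [PadicInt.ker_toZMod]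
      exact (IsLocalRing.mem_maximalIdeal _).2 hnu
    rw [RingHom.mem_ker, RingHom.map_det, hmap, Matrix.det_one] at hmem
    exact one_ne_zero hmem
  obtain ⟨A, hA⟩ := hdet
  refine ⟨A, ?_, hA⟩
  simp only [← hA] at hD
  refine hG.1.mem_of_tendsto (f := fun k => (g k)⁻¹) (b := Filter.atTop) ?_
    (Filter.Eventually.of_forall fun k => G.inv_mem (hg k))
  -- convergence in `GL₂(ℤ_p)` means convergence of the matrices and of their inverses
  rw [Units.isInducing_embedProduct.tendsto_nhds_iff]
  refine Filter.Tendsto.prodMk_nhds ?_ (MulOpposite.continuous_op.continuousAt.tendsto.comp ?_)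
  · convert tendsto_const_add_smul p n (A : Matrix (Fin 2) (Fin 2) ℤ_[p])
      (fun k => -(D k * (↑(g k)⁻¹ : Matrix (Fin 2) (Fin 2) ℤ_[p]))) using 2 with k
    have := congrArg (· * (↑(g k)⁻¹ : Matrix (Fin 2) (Fin 2) ℤ_[p])) (hD k)
    simp only [mul_assoc, Units.mul_inv, mul_one, add_mul, one_mul, Matrix.smul_mul] at this
    rw [this, smul_neg, add_neg_cancel_right]
  · convert tendsto_const_add_smul p n (↑A⁻¹ : Matrix (Fin 2) (Fin 2) ℤ_[p])
      (fun k => (↑A⁻¹ : Matrix (Fin 2) (Fin 2) ℤ_[p]) * D k) using 2 with k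
    have := congrArg ((↑A⁻¹ : Matrix (Fin 2) (Fin 2) ℤ_[p]) * ·) (hD k)
    simp only [← mul_assoc, Units.inv_mul, mul_one, mul_add, one_mul, Matrix.mul_smul] at this
    rw [inv_inv, this]

end
end
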